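/- Let N ≥ 1 and Λ > 1, and let (u, v) be a classical solution of the system (P_Λ) with u > 0 and v > 0 at every point of ℝ^N. Then: (i) if Λ > 3, then u(x) + v(x) < 1 for every x ∈ ℝ^N; (ii) if Λ < 3, then u(x) + v(x) > 1 for every x ∈ ℝ^N. -/

import Mathlib

open scoped RealInnerProductSpace
open Filter

noncomputable section

/-- The Laplacian of `f : ℝ^N → ℝ`, as the sum of the pure second partial
derivatives in the coordinate directions. -/
def lap (N : ℕ) (f : EuclideanSpace ℝ (Fin N) → ℝ) (x : EuclideanSpace ℝ (Fin N)) : ℝ :=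
  ∑ i : Fin N,
    fderiv ℝ (fun y => fderiv ℝ f y (EuclideanSpace.single i 1)) x (EuclideanSpace.single i 1)

/-- `(u, v)` is a classical solution of the system `(P_Λ)` on `ℝ^N`:
`u, v` are `C²` and `-Δu = u - u³ - Λ u v²`, `-Δv = v - v³ - Λ u² v` pointwise. -/
def IsSolution (N : ℕ) (Λ : ℝ) (u v : EuclideanSpace ℝ (Fin N) → ℝ) : Prop :=
  ContDiff ℝ 2 u ∧ ContDiff ℝ 2 v ∧
  (∀ x, -lap N u x = u x - (u x) ^ 3 - Λ * u x * (v x) ^ 2) ∧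
  (∀ x, -lap N v x = v x - (v x) ^ 3 - Λ * (u x) ^ 2 * v x)

/-- Condition `(h∞)`: `u → 1`, `v → 0` as `x_N → +∞` and `u → 0`, `v → 1` as
`x_N → -∞`, uniformly with respect to `x' ∈ ℝ^{N-1}` (the dimension is `N + 1`). -/
def Hinf (N : ℕ) (u v : EuclideanSpace ℝ (Fin (N + 1)) → ℝ) : Prop :=
  (∀ ε : ℝ, 0 < ε → ∃ M : ℝ, ∀ x : EuclideanSpace ℝ (Fin (N + 1)),
    M ≤ x (Fin.last N) → |u x - 1| < ε ∧ |v x| < ε) ∧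
  (∀ ε : ℝ, 0 < ε → ∃ M : ℝ, ∀ x : EuclideanSpace ℝ (Fin (N + 1)),
    x (Fin.last N) ≤ M → |u x| < ε ∧ |v x - 1| < ε)

/-!
Adding the equations, `w = u + v` satisfies `Δw = w³ - w + (Λ - 3) u v w`, so `w` is a strict
subsolution (`Λ > 3`) or a positive strict supersolution (`Λ < 3`) of the Allen–Cahn equation
`Δw = w³ - w`. Boundedness of `w` is not assumed; instead `w` is compared with multiples of powers
of the paraboloid `φ = R² - |x - a|²` on balls. Where a quotient `f / g` is maximal, a multiple of
`g` touches `f` from above, so `g Δf ≤ f Δg`. For a subsolution take `w / φ⁻¹` (the Keller–Osserman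
argument), for a supersolution `φ² / w`. As `R → ∞` this gives `w ≤ 1`, respectively `w ≥ 1`.
Equality at a point would make it a global extremum of `w`, contradicting the strict sign of
`Δw - (w³ - w)` there.
-/

section Laplacian

open InnerProductSpace Laplacian Metric Module Set
open scoped Gradient Topology

lemma iteratedDeriv_two_nonpos_of_isLocalMax {f : ℝ → ℝ} {x : ℝ} (hf : ContinuousAt f x)
    (hmax : IsLocalMax f x) : iteratedDeriv 2 f x ≤ 0 := by
  rw [iteratedDeriv_succ, iteratedDeriv_one]
  by_contra! hpos
  have hmin : IsLocalMin f x := isLocalMin_of_deriv_deriv_pos hpos hmax.deriv_eq_zero hf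
  have hconst : f =ᶠ[𝓝 x] fun _ => f x := by
    filter_upwards [hmax, hmin] with s using le_antisymm
  simp [hconst.deriv.deriv_eq] at hpos

lemma iteratedDeriv_two_quadratic (c₀ c₁ c₂ t : ℝ) :
    iteratedDeriv 2 (fun s : ℝ => c₀ + c₁ * s + c₂ * s ^ 2) t = 2 * c₂ := by
  have hfirst : deriv (fun s : ℝ => c₀ + c₁ * s + c₂ * s ^ 2) = fun s => c₁ + c₂ * (2 * s) := by
    ext1 s
    rw [deriv_fun_add (by fun_prop) (by fun_prop)]
    simp
  rw [iteratedDeriv_succ, iteratedDeriv_one, hfirst]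
  simp [mul_comm]

lemma iteratedDeriv_two_comp_add_smul {E F : Type*} [NormedAddCommGroup E] [NormedSpace ℝ E]
    [NormedAddCommGroup F] [NormedSpace ℝ F] {f : E → F} {x : E} (hf : ContDiffAt ℝ 2 f x)
    (e : E) :
    iteratedDeriv 2 (fun s : ℝ => f (x + s • e)) 0 = iteratedFDeriv ℝ 2 f x ![e, e] := by
  have hline : deriv (fun s : ℝ => x + s • e) = fun _ => e := by
    ext1 s
    simpa using (((hasDerivAt_id s).smul_const e).const_add x).deriv
  have hline₂ : iteratedDeriv 2 (fun s : ℝ => x + s • e) 0 = 0 := by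
    rw [iteratedDeriv_succ, iteratedDeriv_one, hline, deriv_const]
  have hcomp := iteratedDeriv_vcomp_two (f := fun s : ℝ => x + s • e) (x := 0)
    (by simpa using hf) (by fun_prop)
  rw [hline₂, hline, map_zero, add_zero] at hcomp
  simpa [iteratedFDeriv_two_apply, Function.comp_def] using hcomp

section Paraboloid

variable {E : Type*} [NormedAddCommGroup E] {a x : E} {R : ℝ}

/-- The paraboloid `R² - |x - a|²`, positive exactly on the open ball of radius `|R|` about `a`;
its powers serve as barriers on that ball. -/
def paraboloid (a : E) (R : ℝ) (x : E) : ℝ :=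
  R ^ 2 - ‖x - a‖ ^ 2

lemma paraboloid_self (a : E) (R : ℝ) : paraboloid a R a = R ^ 2 := by simp [paraboloid]

lemma paraboloid_le (a : E) (R : ℝ) (x : E) : paraboloid a R x ≤ R ^ 2 :=
  sub_le_self _ (sq_nonneg _)

lemma paraboloid_pos (hx : x ∈ ball a R) : 0 < paraboloid a R x := by
  rw [mem_ball_iff_norm] at hx
  exact sub_pos.2 (pow_lt_pow_left₀ hx (norm_nonneg _) two_ne_zero)

lemma paraboloid_eq_zero (hx : x ∈ sphere a R) : paraboloid a R x = 0 := by
  rw [mem_sphere_iff_norm] at hx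
  rw [paraboloid, hx, sub_self]

variable [InnerProductSpace ℝ E]

lemma contDiff_paraboloid (a : E) (R : ℝ) {n : WithTop ℕ∞} : ContDiff ℝ n (paraboloid a R) :=
  contDiff_const.sub ((contDiff_id.sub contDiff_const).norm_sq ℝ)

lemma gradient_paraboloid [CompleteSpace E] (a : E) (R : ℝ) (x : E) :
    ∇ (paraboloid a R) x = (-2 : ℝ) • (x - a) := by
  refine HasGradientAt.gradient (hasGradientAt_iff_hasFDerivAt.2 ?_)
  refine ((((hasFDerivAt_id x).sub_const a).norm_sq).const_sub (R ^ 2)).congr_fderiv ?_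
  ext y
  simp

lemma paraboloid_add_smul (a : E) (R : ℝ) (x e : E) (s : ℝ) :
    paraboloid a R (x + s • e) =
      paraboloid a R x + -2 * ⟪x - a, e⟫ * s + -‖e‖ ^ 2 * s ^ 2 := by
  rw [paraboloid, paraboloid, add_sub_right_comm, norm_add_sq_real, real_inner_smul_right,
    norm_smul, mul_pow, Real.norm_eq_abs, sq_abs]
  ring

end Paraboloid

variable {E : Type*} [NormedAddCommGroup E] [InnerProductSpace ℝ E] [FiniteDimensional ℝ E]

section Calculus

variable {f g : E → ℝ} {x : E}

lemma laplacian_eq_sum_iteratedDeriv_two {ι : Type*} [Fintype ι] (b : OrthonormalBasis ι ℝ E)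
    (hf : ContDiffAt ℝ 2 f x) :
    Δ f x = ∑ i, iteratedDeriv 2 (fun s : ℝ => f (x + s • b i)) 0 := by
  simp only [laplacian_eq_iteratedFDeriv_orthonormalBasis f b, iteratedDeriv_two_comp_add_smul hf]

lemma lap_eq_laplacian {N : ℕ} {f : EuclideanSpace ℝ (Fin N) → ℝ} {x : EuclideanSpace ℝ (Fin N)}
    (hf : ContDiffAt ℝ 2 f x) : lap N f x = Δ f x := by
  have hdiff : DifferentiableAt ℝ (fderiv ℝ f) x :=
    (hf.fderiv_right (m := 1) (by norm_num)).differentiableAt one_ne_zero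
  rw [laplacian_eq_iteratedFDeriv_orthonormalBasis f (EuclideanSpace.basisFun (Fin N) ℝ)]
  refine Finset.sum_congr rfl fun i _ => ?_
  rw [fderiv_clm_apply hdiff (differentiableAt_const _)]
  simp [iteratedFDeriv_two_apply]

lemma laplacian_comp {φ : ℝ → ℝ} (hφ : ContDiffAt ℝ 2 φ (f x)) (hf : ContDiffAt ℝ 2 f x) :
    Δ (φ ∘ f) x = iteratedDeriv 2 φ (f x) * ‖∇ f x‖ ^ 2 + deriv φ (f x) * Δ f x := by
  have hline (e : E) :
      iteratedDeriv 2 (fun s : ℝ => (φ ∘ f) (x + s • e)) 0 =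
        iteratedDeriv 2 φ (f x) * ⟪∇ f x, e⟫ ^ 2 +
          deriv φ (f x) * iteratedDeriv 2 (fun s : ℝ => f (x + s • e)) 0 := by
    have hfirst : deriv (fun s : ℝ => f (x + s • e)) 0 = ⟪∇ f x, e⟫ := by
      rw [inner_gradient_left]
      exact (hf.differentiableAt two_ne_zero).lineDeriv_eq_fderiv
    have hcomp := iteratedDeriv_comp_two (g := φ) (f := fun s : ℝ => f (x + s • e)) (x := 0)
      (by simpa using hφ) (ContDiffAt.comp 0 (by simpa using hf) (by fun_prop))
    simpa [hfirst, Function.comp_def] using hcomp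
  let b := stdOrthonormalBasis ℝ E
  rw [laplacian_eq_sum_iteratedDeriv_two b (hφ.comp x hf), laplacian_eq_sum_iteratedDeriv_two b hf,
    ← b.sum_sq_inner_left, Finset.mul_sum, Finset.mul_sum, ← Finset.sum_add_distrib]
  exact Finset.sum_congr rfl fun i _ => hline (b i)

lemma laplacian_nonpos_of_isLocalMax (hf : ContDiffAt ℝ 2 f x) (hmax : IsLocalMax f x) :
    Δ f x ≤ 0 := by
  rw [laplacian_eq_sum_iteratedDeriv_two (stdOrthonormalBasis ℝ E) hf]
  refine Finset.sum_nonpos fun i _ => ?_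
  set e := stdOrthonormalBasis ℝ E i
  have hline : ContinuousAt (fun s : ℝ => x + s • e) 0 := by fun_prop
  have hx : x + (0 : ℝ) • e = x := by simp
  exact iteratedDeriv_two_nonpos_of_isLocalMax
    (ContinuousAt.comp (by rw [hx]; exact hf.continuousAt) hline)
    (IsLocalMax.comp_continuous (by rwa [hx]) hline)

lemma laplacian_nonneg_of_isLocalMin (hf : ContDiffAt ℝ 2 f x) (hmin : IsLocalMin f x) :
    0 ≤ Δ f x := by
  have h := laplacian_nonpos_of_isLocalMax hf.neg hmin.neg
  rwa [← Pi.neg_def, laplacian_neg, Pi.neg_apply, neg_nonpos] at h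

lemma laplacian_mul_le_of_isLocalMax_div (hf : ContDiffAt ℝ 2 f x) (hg : ContDiffAt ℝ 2 g x)
    (hpos : 0 < g x) (hmax : IsLocalMax (fun z => f z / g z) x) :
    Δ f x * g x ≤ f x * Δ g x := by
  set c := f x / g x with hc
  have hcg : ContDiffAt ℝ 2 (c • g) x := hg.const_smul c
  have htouch : IsLocalMax (f - c • g) x := by
    filter_upwards [hmax, hg.continuousAt.eventually (lt_mem_nhds hpos)] with z hz hgz
    have hfz : f z ≤ c * g z := (div_le_iff₀ hgz).1 hz
    simpa [c, hpos.ne'] using hfz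
  have hΔ : Δ f x ≤ c * Δ g x := by
    rw [← sub_nonpos, ← smul_eq_mul, ← laplacian_smul c hg, ← hf.laplacian_sub hcg]
    exact laplacian_nonpos_of_isLocalMax (hf.sub hcg) htouch
  calc Δ f x * g x ≤ c * Δ g x * g x := by gcongr
    _ = f x * Δ g x := by rw [hc]; field_simp

end Calculus

section Barriers

variable {a x : E} {R : ℝ}

lemma laplacian_paraboloid (a : E) (R : ℝ) (x : E) :
    Δ (paraboloid a R) x = -2 * finrank ℝ E := by
  rw [laplacian_eq_sum_iteratedDeriv_two (stdOrthonormalBasis ℝ E)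
    (contDiff_paraboloid a R).contDiffAt]
  simp only [paraboloid_add_smul, iteratedDeriv_two_quadratic]
  simp [mul_comm]

lemma laplacian_paraboloid_inv (hx : x ∈ ball a R) :
    Δ (fun z => (paraboloid a R z)⁻¹) x =
      (8 * ‖x - a‖ ^ 2 + 2 * finrank ℝ E * paraboloid a R x) / paraboloid a R x ^ 3 := by
  have hpos := paraboloid_pos hx
  have hcomp := laplacian_comp (contDiffAt_inv ℝ hpos.ne') (contDiff_paraboloid a R).contDiffAt
  rw [gradient_paraboloid, laplacian_paraboloid, norm_smul, iteratedDeriv_eq_iterate,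
    iter_deriv_inv, deriv_inv] at hcomp
  refine hcomp.trans ?_
  simp only [even_two, Even.neg_pow, one_pow, Nat.factorial_two, Nat.cast_ofNat, one_mul,
    Int.reduceNeg, Int.reduceSub, zpow_neg, zpow_ofNat, norm_neg, Real.norm_ofNat]
  field_simp
  ring

lemma laplacian_paraboloid_sq (a : E) (R : ℝ) (x : E) :
    Δ (fun z => paraboloid a R z ^ 2) x =
      8 * ‖x - a‖ ^ 2 - 4 * finrank ℝ E * paraboloid a R x := by
  have hcomp := laplacian_comp (φ := (· ^ 2)) (x := x) (by fun_prop)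
    (contDiff_paraboloid a R).contDiffAt
  rw [gradient_paraboloid, laplacian_paraboloid, norm_smul, iteratedDeriv_eq_iterate,
    iter_deriv_pow] at hcomp
  refine hcomp.trans ?_
  simp only [Nat.cast_ofNat, norm_neg, Real.norm_ofNat, differentiableAt_fun_id,
    deriv_fun_pow, Nat.add_one_sub_one, pow_one, deriv_id'', tsub_self, pow_zero]
  ring

end Barriers

section AllenCahn

variable {w : E → ℝ} {a y : E} {R : ℝ}

lemma sq_sub_one_mul_paraboloid_sq_le_of_isLocalMax (hy : y ∈ ball a R)
    (hw : ContDiffAt ℝ 2 w y) (hpos : 0 < w y) (hsub : w y ^ 3 - w y ≤ Δ w y)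
    (hmax : IsLocalMax (fun x => w x * paraboloid a R x) y) :
    (w y ^ 2 - 1) * paraboloid a R y ^ 2 ≤
      8 * ‖y - a‖ ^ 2 + 2 * finrank ℝ E * paraboloid a R y := by
  have hφ := paraboloid_pos hy
  have htouch := laplacian_mul_le_of_isLocalMax_div (g := fun z => (paraboloid a R z)⁻¹) hw
    ((contDiff_paraboloid a R).contDiffAt.inv hφ.ne') (inv_pos.2 hφ)
    (by simpa only [div_inv_eq_mul] using hmax)
  rw [laplacian_paraboloid_inv hy] at htouch
  refine le_of_mul_le_mul_left ?_ (div_pos hpos (pow_pos hφ 3))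
  calc w y / paraboloid a R y ^ 3 * ((w y ^ 2 - 1) * paraboloid a R y ^ 2)
      = (w y ^ 3 - w y) * (paraboloid a R y)⁻¹ := by field_simp
    _ ≤ Δ w y * (paraboloid a R y)⁻¹ := by gcongr
    _ ≤ _ := htouch
    _ = _ := by ring

lemma one_sub_sq_mul_paraboloid_sq_le_of_isLocalMax (hw : ContDiffAt ℝ 2 w y) (hpos : 0 < w y)
    (hsup : Δ w y ≤ w y ^ 3 - w y) (hmax : IsLocalMax (fun x => paraboloid a R x ^ 2 / w x) y) :
    (1 - w y ^ 2) * paraboloid a R y ^ 2 ≤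
      4 * finrank ℝ E * paraboloid a R y - 8 * ‖y - a‖ ^ 2 := by
  have htouch := laplacian_mul_le_of_isLocalMax_div ((contDiff_paraboloid a R).pow 2).contDiffAt
    hw hpos hmax
  rw [laplacian_paraboloid_sq] at htouch
  refine le_of_mul_le_mul_left ?_ hpos
  linarith [mul_le_mul_of_nonneg_left hsup (sq_nonneg (paraboloid a R y))]

lemma sq_le_of_le_laplacian_on_ball (hR : 0 < R) (hcont : ContinuousOn w (closedBall a R))
    (hw : ∀ x ∈ ball a R, ContDiffAt ℝ 2 w x)
    (hsub : ∀ x ∈ ball a R, w x ^ 3 - w x ≤ Δ w x) (ha : 0 < w a) :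
    w a ^ 2 ≤ 1 + (8 + 2 * finrank ℝ E) / R ^ 2 := by
  obtain ⟨y, hy, hmax⟩ := (isCompact_closedBall a R).exists_isMaxOn_mem_subset
    (f := fun x => w x * paraboloid a R x) (s := ball a R)
    (hcont.mul (contDiff_paraboloid (n := 0) a R).continuous.continuousOn)
    (mem_closedBall_self hR.le) fun z hz => by
      rw [closedBall_sdiff_ball] at hz
      simp only [paraboloid_eq_zero hz, paraboloid_self, mul_zero]
      positivity
  have hφ := paraboloid_pos hy
  have hay : w a * R ^ 2 ≤ w y * paraboloid a R y := by
    simpa [paraboloid_self] using hmax (mem_closedBall_self hR.le)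
  have hwy : 0 < w y := pos_of_mul_pos_left (hay.trans_lt' (by positivity)) hφ.le
  have hbound := sq_sub_one_mul_paraboloid_sq_le_of_isLocalMax hy (hw y hy) hwy (hsub y hy)
    (hmax.isLocalMax (closedBall_mem_nhds_of_mem hy))
  have hnorm : ‖y - a‖ ^ 2 = R ^ 2 - paraboloid a R y := (sub_sub_cancel _ _).symm
  have hφR := paraboloid_le a R y
  have hφR₂ : paraboloid a R y ^ 2 ≤ (R ^ 2) ^ 2 := by gcongr
  have hnφ : finrank ℝ E * paraboloid a R y ≤ finrank ℝ E * R ^ 2 := by gcongr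
  have hay₂ : (w a * R ^ 2) ^ 2 ≤ (w y * paraboloid a R y) ^ 2 := by gcongr
  rw [← mul_le_mul_iff_left₀ (show 0 < (R ^ 2) ^ 2 by positivity)]
  calc w a ^ 2 * (R ^ 2) ^ 2 ≤ (R ^ 2) ^ 2 + (8 + 2 * finrank ℝ E) * R ^ 2 := by linarith
    _ = (1 + (8 + 2 * finrank ℝ E) / R ^ 2) * (R ^ 2) ^ 2 := by field_simp

lemma one_le_of_laplacian_le_on_ball (hR : 0 < R) (hcont : ContinuousOn w (closedBall a R))
    (hw : ∀ x ∈ ball a R, ContDiffAt ℝ 2 w x) (hpos : ∀ x ∈ closedBall a R, 0 < w x)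
    (hsup : ∀ x ∈ ball a R, Δ w x ≤ w x ^ 3 - w x) :
    1 ≤ w a ^ 2 + (finrank ℝ E + 2) ^ 2 / 2 / R ^ 2 := by
  have ha := hpos a (mem_closedBall_self hR.le)
  obtain ⟨y, hy, hmax⟩ := (isCompact_closedBall a R).exists_isMaxOn_mem_subset
    (f := fun x => paraboloid a R x ^ 2 / w x) (s := ball a R)
    (((contDiff_paraboloid (n := 0) a R).continuous.pow 2).continuousOn.div hcont
      fun z hz => (hpos z hz).ne')
    (mem_closedBall_self hR.le) fun z hz => by
      rw [closedBall_sdiff_ball] at hz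
      simp only [paraboloid_eq_zero hz, paraboloid_self, zero_pow two_ne_zero, zero_div]
      positivity
  have hφ := paraboloid_pos hy
  have hwy := hpos y (ball_subset_closedBall hy)
  have hbound := one_sub_sq_mul_paraboloid_sq_le_of_isLocalMax (hw y hy) hwy (hsup y hy)
    (hmax.isLocalMax (closedBall_mem_nhds_of_mem hy))
  have hnorm : ‖y - a‖ ^ 2 = R ^ 2 - paraboloid a R y := (sub_sub_cancel _ _).symm
  have hsquare : 4 * (finrank ℝ E + 2) * paraboloid a R y - 8 * R ^ 2 ≤
      (finrank ℝ E + 2) ^ 2 / 2 / R ^ 2 * paraboloid a R y ^ 2 := by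
    rw [← sub_nonneg]
    calc 0 ≤ ((finrank ℝ E + 2) * paraboloid a R y - 4 * R ^ 2) ^ 2 / (2 * R ^ 2) := by positivity
      _ = _ := by field_simp; ring
  have hy₂ : 1 - w y ^ 2 ≤ (finrank ℝ E + 2) ^ 2 / 2 / R ^ 2 := by
    refine le_of_mul_le_mul_right ?_ (pow_pos hφ 2)
    linarith
  have hya : w y ≤ w a := by
    have hquot : paraboloid a R a ^ 2 / w a ≤ paraboloid a R y ^ 2 / w y :=
      hmax (mem_closedBall_self hR.le)
    have hφ₂ : paraboloid a R y ^ 2 ≤ (R ^ 2) ^ 2 := by gcongr; exact paraboloid_le a R y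
    rw [paraboloid_self] at hquot
    refine (div_le_div_iff_of_pos_left (by positivity) ha hwy).1 (hquot.trans ?_)
    gcongr
  have hya₂ : w y ^ 2 ≤ w a ^ 2 := by gcongr
  linarith

lemma le_of_forall_pos_le_add_div_sq {p q C : ℝ} (h : ∀ R : ℝ, 0 < R → p ≤ q + C / R ^ 2) :
    p ≤ q := by
  have hlim : Tendsto (fun R : ℝ => q + C / R ^ 2) atTop (𝓝 (q + 0)) :=
    tendsto_const_nhds.add (tendsto_const_nhds.div_atTop (tendsto_pow_atTop two_ne_zero))
  rw [add_zero] at hlim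
  exact ge_of_tendsto hlim ((eventually_gt_atTop 0).mono h)

lemma le_one_of_le_laplacian (hw : ContDiff ℝ 2 w) (hsub : ∀ x, w x ^ 3 - w x ≤ Δ w x) (a : E) :
    w a ≤ 1 := by
  rcases le_or_gt (w a) 0 with ha | ha
  · exact ha.trans zero_le_one
  have hsq : w a ^ 2 ≤ 1 := le_of_forall_pos_le_add_div_sq fun R hR =>
    sq_le_of_le_laplacian_on_ball hR hw.continuous.continuousOn (fun _ _ => hw.contDiffAt)
      (fun x _ => hsub x) ha
  exact (sq_le_one_iff₀ ha.le).1 hsq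

lemma one_le_of_laplacian_le (hw : ContDiff ℝ 2 w) (hpos : ∀ x, 0 < w x)
    (hsup : ∀ x, Δ w x ≤ w x ^ 3 - w x) (a : E) : 1 ≤ w a := by
  have hsq : 1 ≤ w a ^ 2 := le_of_forall_pos_le_add_div_sq fun R hR =>
    one_le_of_laplacian_le_on_ball hR hw.continuous.continuousOn (fun _ _ => hw.contDiffAt)
      (fun x _ => hpos x) (fun x _ => hsup x)
  exact (one_le_sq_iff₀ (hpos a).le).1 hsq

lemma lt_one_of_lt_laplacian (hw : ContDiff ℝ 2 w) (hsub : ∀ x, w x ^ 3 - w x < Δ w x) (x : E) :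
    w x < 1 := by
  have hle := le_one_of_le_laplacian hw fun z => (hsub z).le
  refine (hle x).lt_of_ne fun hx => ?_
  have hmax : IsLocalMax w x := Eventually.of_forall fun z => (hle z).trans hx.ge
  refine (laplacian_nonpos_of_isLocalMax hw.contDiffAt hmax).not_gt ?_
  simpa [hx] using hsub x

lemma one_lt_of_laplacian_lt (hw : ContDiff ℝ 2 w) (hpos : ∀ x, 0 < w x)
    (hsup : ∀ x, Δ w x < w x ^ 3 - w x) (x : E) : 1 < w x := by
  have hge := one_le_of_laplacian_le hw hpos fun z => (hsup z).le
  refine (hge x).lt_of_ne' fun hx => ?_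
  have hmin : IsLocalMin w x := Eventually.of_forall fun z => hx.le.trans (hge z)
  refine (laplacian_nonneg_of_isLocalMin hw.contDiffAt hmin).not_gt ?_
  simpa [hx] using hsup x

end AllenCahn

theorem stmt_12_general {Λ : ℝ} {u v : E → ℝ} (hu₂ : ContDiff ℝ 2 u) (hv₂ : ContDiff ℝ 2 v)
    (hueq : ∀ x, -Δ u x = u x - u x ^ 3 - Λ * u x * v x ^ 2)
    (hveq : ∀ x, -Δ v x = v x - v x ^ 3 - Λ * u x ^ 2 * v x)
    (hu : ∀ x, 0 < u x) (hv : ∀ x, 0 < v x) :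
    (3 < Λ → ∀ x, u x + v x < 1) ∧ (Λ < 3 → ∀ x, 1 < u x + v x) := by
  have hw : ContDiff ℝ 2 (u + v) := hu₂.add hv₂
  have hsum (x : E) : 0 < (u + v) x := add_pos (hu x) (hv x)
  have hprod (x : E) : 0 < u x * v x * (u + v) x := mul_pos (mul_pos (hu x) (hv x)) (hsum x)
  have hΔ (x : E) : Δ (u + v) x =
      (u + v) x ^ 3 - (u + v) x + (Λ - 3) * (u x * v x * (u + v) x) := by
    rw [hu₂.contDiffAt.laplacian_add hv₂.contDiffAt, Pi.add_apply]
    linear_combination -hueq x - hveq x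
  refine ⟨fun hΛ => lt_one_of_lt_laplacian (w := u + v) hw fun x => ?_,
    fun hΛ => one_lt_of_laplacian_lt (w := u + v) hw hsum fun x => ?_⟩
  · rw [hΔ]
    exact lt_add_of_pos_right _ (mul_pos (sub_pos.2 hΛ) (hprod x))
  · rw [hΔ]
    exact add_lt_of_neg_right _ (mul_neg_of_neg_of_pos (sub_neg.2 hΛ) (hprod x))

end Laplacian

/-- Theorem 1.11: comparison with the case `Λ = 3`:
`u + v < 1` if `Λ > 3`, and `u + v > 1` if `Λ < 3`. -/
theorem stmt_12 (N : ℕ) (Λ : ℝ) (hΛ : 1 < Λ)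
    (u v : EuclideanSpace ℝ (Fin (N + 1)) → ℝ)
    (hsol : IsSolution (N + 1) Λ u v)
    (hu : ∀ x, 0 < u x) (hv : ∀ x, 0 < v x) :
    (3 < Λ → ∀ x, u x + v x < 1) ∧ (Λ < 3 → ∀ x, 1 < u x + v x) := by
  obtain ⟨hu₂, hv₂, hueq, hveq⟩ := hsol
  exact stmt_12_general hu₂ hv₂
    (fun x => by rw [← lap_eq_laplacian hu₂.contDiffAt, hueq])
    (fun x => by rw [← lap_eq_laplacian hv₂.contDiffAt, hveq]) hu hv
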